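/- arXiv:1807.11315 — 3 statements merged into one kernel-verified Lean document; each statement's English description precedes it below -/
import Mathlib

section
/- (Theorem 1, one-step bound) Assume the stability bounds (NE1) and (NE2) with constants 0 < λ_min ≤ λ_max, and set κ = λ_max/λ_min. Let 0 < ξ < 2/λ_max, let e ∈ V, let 1 ≤ p ≤ n+1, and let I be a uniform random subset of size p of {0,1,…,n}. Define the updated error e' = e − ξ Σ_{i∈I} ω_i R_i T_i e. Then E(‖e'‖²) ≤ (1 − λ_max ξ (2 − λ_max ξ) p / (κ (n+1))) ‖e‖². -/
/-!
Write `q i = ω i * ‖T_i e‖ ^ 2`, where `T_i` is the adjoint of `R i`. For a fixed subset `I`,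
expanding the square gives the cross term `⟪∑_{i ∈ I} ω_i R_i T_i e, e⟫ = ∑_{i ∈ I} q i`, while
(NE2), applied to the local vectors that equal `T_i e` for `i ∈ I` and vanish otherwise, bounds the
quadratic term by `lmax * ∑_{i ∈ I} q i`. Hence
`‖e'‖ ^ 2 ≤ ‖e‖ ^ 2 - ξ * (2 - lmax * ξ) * ∑_{i ∈ I} q i` for every `I` (`norm_sq_update_le`).
Each index lies in a uniform random `p`-subset with probability `p / (n + 1)`, so averaging replaces
the partial sum by `p / (n + 1)` times the full sum (`average_sum_powersetCard`), and the full sum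
is at least `lmin * ‖e‖ ^ 2` by (NE1).
-/

open scoped RealInnerProductSpace

/-- The expected sum of `q` over a uniform random `p`-subset is `p / (n + 1)` times its full sum:
every index belongs to exactly `n.choose (p - 1)` of the `p`-subsets. -/
lemma average_sum_powersetCard {n p : ℕ} (hp1 : 1 ≤ p) (hp2 : p ≤ n + 1) (q : Fin (n + 1) → ℝ) :
    (((n + 1).choose p : ℝ))⁻¹ *
        ∑ I ∈ Finset.powersetCard p (Finset.univ : Finset (Fin (n + 1))), ∑ i ∈ I, q i =
      (p : ℝ) / (n + 1) * ∑ i, q i := by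
  obtain ⟨k, rfl⟩ : ∃ k, p = k + 1 := ⟨p - 1, by omega⟩
  have hcard (i : Fin (n + 1)) :
      ((Finset.powersetCard (k + 1) (Finset.univ : Finset (Fin (n + 1)))).filter
        (fun I => i ∈ I)).card = n.choose k := by
    have h := Finset.card_filter_powersetCard_subset {i} (Finset.univ : Finset (Fin (n + 1)))
      (k + 1) (by simp) (by simp)
    simpa using h
  have hsum : ∑ I ∈ Finset.powersetCard (k + 1) (Finset.univ : Finset (Fin (n + 1))),
      ∑ i ∈ I, q i = (n.choose k : ℝ) * ∑ i, q i := by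
    rw [Finset.sum_comm' (s' := fun i =>
        (Finset.powersetCard (k + 1) (Finset.univ : Finset (Fin (n + 1)))).filter
          (fun I => i ∈ I)) (t' := Finset.univ) (by intro I i; simp),
      Finset.mul_sum]
    refine Finset.sum_congr rfl fun i _ => ?_
    rw [Finset.sum_const, hcard, nsmul_eq_mul]
  have hchoose : ((n : ℝ) + 1) * n.choose k = (n + 1).choose (k + 1) * (k + 1) := by
    exact_mod_cast Nat.add_one_mul_choose_eq n k
  have hpos : (0 : ℝ) < (n + 1).choose (k + 1) := by exact_mod_cast Nat.choose_pos hp2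
  have hn : (0 : ℝ) < n + 1 := by positivity
  rw [hsum]
  push_cast
  field_simp
  linear_combination (∑ i, q i) * hchoose

section

variable {V : Type*} [NormedAddCommGroup V] [InnerProductSpace ℝ V]
  {ι : Type*} {W : ι → Type*} [∀ i, NormedAddCommGroup (W i)]
  [∀ i, InnerProductSpace ℝ (W i)]
  (R : ∀ i, W i →L[ℝ] V) (ω : ι → ℝ)

lemma inner_sum_adjoint [CompleteSpace V] [∀ i, CompleteSpace (W i)] (I : Finset ι) (e : V) :
    ⟪∑ i ∈ I, ω i • R i ((ContinuousLinearMap.adjoint (R i)) e), e⟫ =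
      ∑ i ∈ I, ω i * ‖(ContinuousLinearMap.adjoint (R i)) e‖ ^ 2 := by
  rw [sum_inner]
  refine Finset.sum_congr rfl fun i _ => ?_
  rw [real_inner_smul_left, ← ContinuousLinearMap.adjoint_inner_right, real_inner_self_eq_norm_sq]

/-- (NE2) restricts to any subset of indices, by extending local vectors by zero. -/
lemma norm_sq_partial_sum_le [Fintype ι] {lmax : ℝ}
    (hNE2 : ∀ w : ∀ i, W i,
      ‖∑ i, ω i • R i (w i)‖ ^ 2 ≤ lmax * ∑ i, ω i * ‖w i‖ ^ 2)
    (I : Finset ι) (w : ∀ i, W i) :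
    ‖∑ i ∈ I, ω i • R i (w i)‖ ^ 2 ≤ lmax * ∑ i ∈ I, ω i * ‖w i‖ ^ 2 := by
  classical
  have h := hNE2 fun i => if i ∈ I then w i else 0
  have h1 : ∑ i, ω i • R i (if i ∈ I then w i else 0) = ∑ i ∈ I, ω i • R i (w i) := by
    simp [apply_ite, Finset.sum_ite_mem]
  have h2 : ∑ i, ω i * ‖if i ∈ I then w i else 0‖ ^ 2 = ∑ i ∈ I, ω i * ‖w i‖ ^ 2 := by
    simp [apply_ite, ite_pow, Finset.sum_ite_mem]
  rwa [h1, h2] at h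

/-- Deterministic error reduction for a fixed set `I` of subspace corrections. -/
lemma norm_sq_update_le [CompleteSpace V] [∀ i, CompleteSpace (W i)] [Fintype ι]
    {lmax : ℝ}
    (hNE2 : ∀ w : ∀ i, W i,
      ‖∑ i, ω i • R i (w i)‖ ^ 2 ≤ lmax * ∑ i, ω i * ‖w i‖ ^ 2)
    (ξ : ℝ) (I : Finset ι) (e : V) :
    ‖e - ξ • ∑ i ∈ I, ω i • R i ((ContinuousLinearMap.adjoint (R i)) e)‖ ^ 2 ≤
      ‖e‖ ^ 2 - ξ * (2 - lmax * ξ) *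
        ∑ i ∈ I, ω i * ‖(ContinuousLinearMap.adjoint (R i)) e‖ ^ 2 := by
  have h := norm_sq_partial_sum_le R ω hNE2 I fun i => (ContinuousLinearMap.adjoint (R i)) e
  rw [norm_sub_sq_real, real_inner_smul_right, real_inner_comm, inner_sum_adjoint, norm_smul,
    mul_pow, Real.norm_eq_abs, sq_abs]
  linarith [mul_le_mul_of_nonneg_left h (sq_nonneg ξ)]

end

/-- **Theorem 1, one-step bound.** Under the stability bounds (NE1), (NE2) with
`0 < λ_min ≤ λ_max`, `κ = λ_max/λ_min`, relaxation parameter `0 < ξ < 2/λ_max`, and a uniform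
random subset `I` of size `p` of `{0,…,n}`, the update `e' = e − ξ ∑_{i∈I} ω_i R_i T_i e`
satisfies `E(‖e'‖²) ≤ (1 − λ_max ξ (2 − λ_max ξ) p/(κ(n+1))) ‖e‖²`. -/
theorem one_step_expected_error_reduction
    {V : Type*} [NormedAddCommGroup V] [InnerProductSpace ℝ V] [CompleteSpace V]
    {n : ℕ} {W : Fin (n + 1) → Type*}
    [∀ i, NormedAddCommGroup (W i)] [∀ i, InnerProductSpace ℝ (W i)]
    [∀ i, CompleteSpace (W i)]
    (R : ∀ i, W i →L[ℝ] V) (ω : Fin (n + 1) → ℝ) (hω : ∀ i, 0 < ω i)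
    (lmin lmax : ℝ) (hlmin : 0 < lmin) (hminmax : lmin ≤ lmax)
    (hNE1 : ∀ v : V,
      lmin * ‖v‖ ^ 2 ≤ ⟪(∑ i, ω i • R i ((ContinuousLinearMap.adjoint (R i)) v)), v⟫)
    (hNE2 : ∀ w : ∀ i, W i,
      ‖∑ i, ω i • R i (w i)‖ ^ 2 ≤ lmax * ∑ i, ω i * ‖w i‖ ^ 2)
    (ξ : ℝ) (hξ0 : 0 < ξ) (hξ2 : ξ < 2 / lmax)
    (e : V) (p : ℕ) (hp1 : 1 ≤ p) (hp2 : p ≤ n + 1) :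
    (((n + 1).choose p : ℝ))⁻¹ *
        ∑ I ∈ Finset.powersetCard p (Finset.univ : Finset (Fin (n + 1))),
          ‖e - ξ • ∑ i ∈ I, ω i • R i ((ContinuousLinearMap.adjoint (R i)) e)‖ ^ 2 ≤
      (1 - lmax * ξ * (2 - lmax * ξ) * (p : ℝ) / ((lmax / lmin) * (n + 1))) * ‖e‖ ^ 2 := by
  have hlmax : 0 < lmax := hlmin.trans_le hminmax
  have hξ : 0 < 2 - lmax * ξ := by
    rw [lt_div_iff₀ hlmax] at hξ2
    linarith
  have hC : (0 : ℝ) < (n + 1).choose p := by exact_mod_cast Nat.choose_pos hp2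
  have hNE1e := hNE1 e
  rw [inner_sum_adjoint] at hNE1e
  have havg := average_sum_powersetCard hp1 hp2
    fun i => ω i * ‖(ContinuousLinearMap.adjoint (R i)) e‖ ^ 2
  calc
    _ ≤ (((n + 1).choose p : ℝ))⁻¹ *
          ∑ I ∈ Finset.powersetCard p (Finset.univ : Finset (Fin (n + 1))),
            (‖e‖ ^ 2 - ξ * (2 - lmax * ξ) *
              ∑ i ∈ I, ω i * ‖(ContinuousLinearMap.adjoint (R i)) e‖ ^ 2) := by
        gcongr with I
        exact norm_sq_update_le R ω hNE2 ξ I e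
    _ = ‖e‖ ^ 2 - ξ * (2 - lmax * ξ) * ((p : ℝ) / (n + 1) *
          ∑ i, ω i * ‖(ContinuousLinearMap.adjoint (R i)) e‖ ^ 2) := by
        rw [← havg, Finset.sum_sub_distrib, ← Finset.mul_sum, Finset.sum_const,
          Finset.card_powersetCard, Finset.card_univ, Fintype.card_fin, nsmul_eq_mul]
        field_simp
    _ ≤ ‖e‖ ^ 2 - ξ * (2 - lmax * ξ) * ((p : ℝ) / (n + 1) * (lmin * ‖e‖ ^ 2)) := by
        gcongr
    _ = _ := by
        field_simp
end

section
/- (Non-uniform sampling version of Theorem 1) Assume the stability bound (NE2) with constant λ_max > 0. Let q_0,…,q_n > 0 satisfy Σ_{i=0}^n q_i = 1, let p ≥ 1, and let I be a random subset of {0,1,…,n} (with an arbitrary finitely supported distribution) whose inclusion probabilities satisfy P(i ∈ I) = p q_i for every i. Let P̃ = Σ_{i=0}^n q_i ω_i R_i T_i and assume λ̃_min a(v,v) ≤ a(P̃v,v) for all v ∈ V with λ̃_min > 0. Then, with ξ = 1/λ_max, for every e ∈ V: E(‖e − ξ Σ_{i∈I} ω_i R_i T_i e‖²) ≤ (1 −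 λ̃_min p / λ_max) ‖e‖². -/
open scoped RealInnerProductSpace

/-!
Write `S_I = ∑_{i∈I} ω_i R_i T_i e`. By adjointness `⟪S_I, e⟫ = ∑_{i∈I} ω_i ‖T_i e‖²`, while the
stability bound applied to the family equal to `T_i e` on `I` and `0` elsewhere gives
`‖S_I‖² ≤ λ_max ⟪S_I, e⟫` (`norm_sq_subset_sum_le`). Expanding the square with `ξ = 1/λ_max`
then yields, for every realization of `I`, `‖e - ξ S_I‖² ≤ ‖e‖² - ξ ∑_{i∈I} ω_i ‖T_i e‖²`
(`norm_sq_sub_subset_sum_le`). Taking the expectation replaces the indicator of `i ∈ I` by its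
probability `p q_i` (`expectation_subset_sum`), so the last sum becomes `p ⟪P̃ e, e⟫`, which is at
least `p λ̃_min ‖e‖²`.
-/

section SubsetSums

variable {V : Type*} [NormedAddCommGroup V] [InnerProductSpace ℝ V] [CompleteSpace V]
  {ι : Type*} {W : ι → Type*}
  [∀ i, NormedAddCommGroup (W i)] [∀ i, InnerProductSpace ℝ (W i)] [∀ i, CompleteSpace (W i)]

theorem inner_sum_smul_apply_adjoint (R : ∀ i, W i →L[ℝ] V) (c : ι → ℝ) (I : Finset ι) (e : V) :
    ⟪∑ i ∈ I, c i • R i (ContinuousLinearMap.adjoint (R i) e), e⟫ =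
      ∑ i ∈ I, c i * ‖ContinuousLinearMap.adjoint (R i) e‖ ^ 2 := by
  rw [sum_inner]
  refine Finset.sum_congr rfl fun i _ => ?_
  rw [real_inner_smul_left, ← ContinuousLinearMap.adjoint_inner_right,
    real_inner_self_eq_norm_sq]

/-- The stability bound restricts to every subset `I` of the indices: extend the family
`T_i e`, `i ∈ I`, by zero. -/
theorem norm_sq_subset_sum_le [Fintype ι] (R : ∀ i, W i →L[ℝ] V) (ω : ι → ℝ) (lmax : ℝ)
    (hNE2 : ∀ w : ∀ i, W i, ‖∑ i, ω i • R i (w i)‖ ^ 2 ≤ lmax * ∑ i, ω i * ‖w i‖ ^ 2)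
    (I : Finset ι) (e : V) :
    ‖∑ i ∈ I, ω i • R i (ContinuousLinearMap.adjoint (R i) e)‖ ^ 2 ≤
      lmax * ∑ i ∈ I, ω i * ‖ContinuousLinearMap.adjoint (R i) e‖ ^ 2 := by
  classical
  have h := hNE2 fun i => if i ∈ I then ContinuousLinearMap.adjoint (R i) e else 0
  have h1 : ∀ i, ω i • R i (if i ∈ I then ContinuousLinearMap.adjoint (R i) e else 0) =
      if i ∈ I then ω i • R i (ContinuousLinearMap.adjoint (R i) e) else 0 := by
    intro i; split_ifs <;> simp
  have h2 : ∀ i, ω i * ‖(if i ∈ I then ContinuousLinearMap.adjoint (R i) e else 0)‖ ^ 2 =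
      if i ∈ I then ω i * ‖ContinuousLinearMap.adjoint (R i) e‖ ^ 2 else 0 := by
    intro i; split_ifs <;> simp
  simpa only [h1, h2, Finset.sum_ite_mem, Finset.univ_inter] using h

/-- Error reduction for one fixed subset `I`. -/
theorem norm_sq_sub_subset_sum_le [Fintype ι] (R : ∀ i, W i →L[ℝ] V) (ω : ι → ℝ) (lmax : ℝ)
    (hlmax : 0 < lmax)
    (hNE2 : ∀ w : ∀ i, W i, ‖∑ i, ω i • R i (w i)‖ ^ 2 ≤ lmax * ∑ i, ω i * ‖w i‖ ^ 2)
    (I : Finset ι) (e : V) :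
    ‖e - lmax⁻¹ • ∑ i ∈ I, ω i • R i (ContinuousLinearMap.adjoint (R i) e)‖ ^ 2 ≤
      ‖e‖ ^ 2 - lmax⁻¹ * ∑ i ∈ I, ω i * ‖ContinuousLinearMap.adjoint (R i) e‖ ^ 2 := by
  have hS := norm_sq_subset_sum_le R ω lmax hNE2 I e
  have hin := inner_sum_smul_apply_adjoint R ω I e
  rw [norm_sub_sq_real, real_inner_smul_right, real_inner_comm, hin, norm_smul, mul_pow,
    Real.norm_eq_abs, sq_abs]
  have h := mul_le_mul_of_nonneg_left hS (sq_nonneg lmax⁻¹)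
  rw [← mul_assoc, show lmax⁻¹ ^ 2 * lmax = lmax⁻¹ by field_simp] at h
  linarith

end SubsetSums

/-- The expectation of `∑_{i∈I} f i` is `∑ i, P(i ∈ I) f i`. -/
theorem expectation_subset_sum {ι : Type*} [Fintype ι] [DecidableEq ι] (μ : Finset ι → ℝ)
    (f : ι → ℝ) :
    ∑ I : Finset ι, μ I * ∑ i ∈ I, f i =
      ∑ i, (∑ I ∈ Finset.univ.filter (fun I : Finset ι => i ∈ I), μ I) * f i := by
  simp_rw [Finset.mul_sum, Finset.sum_mul]
  exact Finset.sum_comm' (by simp)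

/-- **non-uniform sampling version of Theorem 1.** Assume (NE2) with
`λ_max > 0`. Let `q_0,…,q_n > 0` sum to `1`, let `p ≥ 1`, and let `I` be a random subset of
`{0,…,n}` with distribution `μ` whose inclusion probabilities satisfy `P(i ∈ I) = p q_i`.
Let `P̃ = ∑_i q_i ω_i R_i T_i` satisfy `λ̃_min a(v,v) ≤ a(P̃v,v)` with `λ̃_min > 0`.
Then, with `ξ = 1/λ_max`,
`E(‖e − ξ ∑_{i∈I} ω_i R_i T_i e‖²) ≤ (1 − λ̃_min p/λ_max) ‖e‖²`. -/
theorem nonuniform_sampling_expected_error_reduction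
    {V : Type*} [NormedAddCommGroup V] [InnerProductSpace ℝ V] [CompleteSpace V]
    {n : ℕ} {W : Fin (n + 1) → Type*}
    [∀ i, NormedAddCommGroup (W i)] [∀ i, InnerProductSpace ℝ (W i)]
    [∀ i, CompleteSpace (W i)]
    (R : ∀ i, W i →L[ℝ] V) (ω : Fin (n + 1) → ℝ) (hω : ∀ i, 0 < ω i)
    (lmax : ℝ) (hlmax : 0 < lmax)
    (hNE2 : ∀ w : ∀ i, W i,
      ‖∑ i, ω i • R i (w i)‖ ^ 2 ≤ lmax * ∑ i, ω i * ‖w i‖ ^ 2)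
    (q : Fin (n + 1) → ℝ) (hq : ∀ i, 0 < q i) (hqsum : ∑ i, q i = 1)
    (p : ℝ) (hp : 1 ≤ p)
    (μ : Finset (Fin (n + 1)) → ℝ) (hμ0 : ∀ I, 0 ≤ μ I)
    (hμ1 : ∑ I : Finset (Fin (n + 1)), μ I = 1)
    (hincl : ∀ i : Fin (n + 1),
      ∑ I ∈ Finset.univ.filter (fun I : Finset (Fin (n + 1)) => i ∈ I), μ I = p * q i)
    (ltmin : ℝ) (hltmin : 0 < ltmin)
    (hPt : ∀ v : V,
      ltmin * ‖v‖ ^ 2 ≤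
        ⟪(∑ i, (q i * ω i) • R i ((ContinuousLinearMap.adjoint (R i)) v)), v⟫)
    (e : V) :
    ∑ I : Finset (Fin (n + 1)),
        μ I * ‖e - lmax⁻¹ • ∑ i ∈ I, ω i • R i ((ContinuousLinearMap.adjoint (R i)) e)‖ ^ 2 ≤
      (1 - ltmin * p / lmax) * ‖e‖ ^ 2 := by
  have hPe := hPt e
  rw [inner_sum_smul_apply_adjoint R (fun i => q i * ω i)] at hPe
  set t : Fin (n + 1) → ℝ := fun i => ω i * ‖ContinuousLinearMap.adjoint (R i) e‖ ^ 2 with ht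
  have hE : ∑ I : Finset (Fin (n + 1)), μ I * ∑ i ∈ I, t i =
      p * ∑ i, q i * ω i * ‖ContinuousLinearMap.adjoint (R i) e‖ ^ 2 := by
    rw [expectation_subset_sum, Finset.mul_sum]
    refine Finset.sum_congr rfl fun i _ => ?_
    rw [hincl i, ht]
    ring
  calc
    _ ≤ ∑ I : Finset (Fin (n + 1)), μ I * (‖e‖ ^ 2 - lmax⁻¹ * ∑ i ∈ I, t i) :=
      Finset.sum_le_sum fun I _ => mul_le_mul_of_nonneg_left
        (norm_sq_sub_subset_sum_le R ω lmax hlmax hNE2 I e) (hμ0 I)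
    _ = (∑ I, μ I) * ‖e‖ ^ 2 - lmax⁻¹ * ∑ I : Finset (Fin (n + 1)), μ I * ∑ i ∈ I, t i := by
      rw [Finset.sum_mul, Finset.mul_sum, ← Finset.sum_sub_distrib]
      exact Finset.sum_congr rfl fun I _ => by ring
    _ = ‖e‖ ^ 2 - lmax⁻¹ * p *
          ∑ i, q i * ω i * ‖ContinuousLinearMap.adjoint (R i) e‖ ^ 2 := by
      rw [hμ1, hE]
      ring
    _ ≤ ‖e‖ ^ 2 - lmax⁻¹ * p * (ltmin * ‖e‖ ^ 2) := by
      gcongr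
    _ = (1 - ltmin * p / lmax) * ‖e‖ ^ 2 := by
      ring
end

section
/- (Theorem 2, multi-step bound for the accelerated scheme) Assume the stability bounds (NE1) and (NE2) with 0 < λ_min ≤ λ_max, so that P is bijective, and let 0 < λ̲ ≤ λ_min ≤ λ_max ≤ λ̄ with κ̄ = λ̄/λ̲. Let u ∈ V, let p_0, p_1, … be integers with 1 ≤ p_s ≤ n+1, and let I_0, I_1, … be independent random subsets of {0,1,…,n}, where I_s is uniform among subsets of size p_s. Define η = (λ̄ λ̲)^{-1/2}, and for each s: β_s = 1 − p_s/((n+1)√κ̄), α_s ∈ (0,1) by (1−α_s)/α_s = (n+1) λ̄ η / p_s. Define the random error sequences by e_u^{(0)} = e_v^{(0)} = u and, for s ≥ 0, e_w^{(s)} = α_s e_v^{(s)} + (1−α_s) e_u^{(s)}, D_s = Σ_{i∈I_s} ω_i R_i T_i e_w^{(s)}, e_u^{(s+1)} = e_w^{(s)} − λ̄^{-1} D_s, e_v^{(s+1)} = β_s e_v^{(s)} + (1−β_s) e_w^{(s)} − η D_s. Then for every m ≥ 1: E(‖e_u^{(m)}‖²) ≤ 2 ∏_{s=0}^{m−1}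 (1 − p_s/((n+1)√κ̄)) · ‖u‖². -/
/-!
The proof is a Lyapunov argument for `Φ(e_u, e_v) = ⟪P⁻¹ e_v, e_v⟫ + λ̲⁻¹ ‖e_u‖²`, where `P⁻¹`
exists by Lax–Milgram and (NE1).

For a fixed subset `I`, the correction `D = ∑_{i ∈ I} ω_i R_i T_i e_w` satisfies
`‖D‖² ≤ λ̄ ⟪D, e_w⟫` by (NE2) (`norm_sq_schwarz_le`) and `⟪P⁻¹ D, D⟫ ≤ ⟪D, e_w⟫`
(`inner_inverse_schwarz_le`). The gain in `‖e_u‖²` from the first estimate pays exactly for the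
quadratic term in `⟪P⁻¹ e_v, e_v⟫` bounded by the second, which leaves an upper bound for the new
value of `Φ` that is affine in `D` (`lyapunov_step_le`). Its mean over the `p`-subsets follows from
`E D = p / (n+1) P e_w`, and since `⟪P e_w, P⁻¹ z⟫ = ⟪e_w, z⟫` the operator disappears from the
cross term. The choices of `α`, `β`, `η`, together with `⟪P⁻¹ z, z⟫ ≤ λ̲⁻¹ ‖z‖²`, then give
`E Φ_new ≤ β Φ` (`deterministic_step_le`, `sum_lyapunov_step_le`).

Iterating over the independent subsets, and using `λ̲⁻¹ ‖e_u‖² ≤ Φ` at the end and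
`Φ(u, u) ≤ 2 λ̲⁻¹ ‖u‖²` at the start, yields the bound; hence the factor `2`.
-/

open scoped RealInnerProductSpace

/-- The accelerated (Nesterov-type) stochastic subspace correction iteration in vector form:
the pair `(e_u⁽ˢ⁾, e_v⁽ˢ⁾)` of error sequences, started at `(u, u)`, with
`e_w⁽ˢ⁾ = αₛ e_v⁽ˢ⁾ + (1−αₛ) e_u⁽ˢ⁾`, `Dₛ = ∑_{i∈Iₛ} ω_i R_i T_i e_w⁽ˢ⁾`,
`e_u⁽ˢ⁺¹⁾ = e_w⁽ˢ⁾ − ξ Dₛ`, `e_v⁽ˢ⁺¹⁾ = βₛ e_v⁽ˢ⁾ + (1−βₛ) e_w⁽ˢ⁾ − η Dₛ`. -/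
noncomputable def accelSeq
    {V : Type*} [NormedAddCommGroup V] [InnerProductSpace ℝ V] [CompleteSpace V]
    {n : ℕ} {W : Fin (n + 1) → Type*}
    [∀ i, NormedAddCommGroup (W i)] [∀ i, InnerProductSpace ℝ (W i)]
    [∀ i, CompleteSpace (W i)]
    (R : ∀ i, W i →L[ℝ] V) (ω : Fin (n + 1) → ℝ) (ξ η : ℝ) (α β : ℕ → ℝ) (u : V)
    (Is : ℕ → Finset (Fin (n + 1))) : ℕ → V × V
  | 0 => (u, u)
  | s + 1 =>
      let q := accelSeq R ω ξ η α β u Is s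
      let ew := α s • q.2 + (1 - α s) • q.1
      let D := ∑ i ∈ Is s, ω i • R i ((ContinuousLinearMap.adjoint (R i)) ew)
      (ew - ξ • D, β s • q.2 + (1 - β s) • ew - η • D)

/-! ### Averages over random subsets -/

/-- A fixed index lies in a uniform `k`-subset of an `(n+1)`-element set with probability
`k / (n+1)`; hence the mean of `∑ i ∈ I, g i` is `k / (n+1)` times the full sum. -/
lemma sum_powersetCard_sum {V : Type*} [AddCommGroup V] [Module ℝ V] {n k : ℕ} (hk : 1 ≤ k)
    (g : Fin (n + 1) → V) :
    ∑ I ∈ Finset.powersetCard k (Finset.univ : Finset (Fin (n + 1))), ∑ i ∈ I, g i =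
      (((n + 1).choose k : ℝ) * (k / (n + 1))) • ∑ i, g i := by
  obtain ⟨k, rfl⟩ := Nat.exists_eq_add_of_le' hk
  have hcard (i : Fin (n + 1)) :
      (((Finset.powersetCard (k + 1) (Finset.univ : Finset (Fin (n + 1)))).filter
        (fun I => i ∈ I)).card : ℝ) = (n + 1).choose (k + 1) * ((k + 1 : ℕ) / (n + 1)) := by
    have h := Finset.card_filter_powersetCard_subset {i}
      (Finset.univ : Finset (Fin (n + 1))) (k + 1)
    simp only [Finset.singleton_subset_iff, Finset.mem_univ, Finset.card_singleton,
      Finset.card_univ, Fintype.card_fin, Nat.add_sub_cancel] at h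
    have h2 : ((n + 1 : ℕ) : ℝ) * n.choose k = (n + 1).choose (k + 1) * (k + 1 : ℕ) := by
      exact_mod_cast Nat.add_one_mul_choose_eq n k
    rw [h trivial (by lia)]
    push_cast at h2 ⊢
    field_simp
    linarith
  calc
    _ = ∑ I ∈ Finset.powersetCard (k + 1) (Finset.univ : Finset (Fin (n + 1))),
          ∑ i, if i ∈ I then g i else 0 := by simp
    _ = ∑ i, (((Finset.powersetCard (k + 1) (Finset.univ : Finset (Fin (n + 1)))).filter
          (fun I => i ∈ I)).card : ℝ) • g i := by
        rw [Finset.sum_comm]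
        refine Finset.sum_congr rfl fun i _ => ?_
        rw [← Finset.sum_filter, Finset.sum_const, Nat.cast_smul_eq_nsmul]
    _ = _ := by simp_rw [hcard, Finset.smul_sum]

/-- Summation over a product of `m + 1` finsets, with the last coordinate innermost. -/
lemma sum_piFinset_snoc {A : Type*} (m : ℕ) (S : Fin (m + 1) → Finset A)
    (F : (Fin (m + 1) → A) → ℝ) :
    ∑ J ∈ Fintype.piFinset S, F J =
      ∑ J ∈ Fintype.piFinset (fun s : Fin m => S s.castSucc), ∑ I ∈ S (Fin.last m),
        F (Fin.snoc (α := fun _ => A) J I) := by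
  have h := Finset.filter_piFinset_eq_map_snocEquiv (α := fun _ => A) S (fun _ => True)
  simp only [Finset.filter_true] at h
  rw [h, Finset.sum_map, Finset.sum_product_right]
  rfl

/-! ### The additive Schwarz operator and its inverse -/

section Schwarz

variable {V : Type*} [NormedAddCommGroup V] [InnerProductSpace ℝ V] [CompleteSpace V]
  {n : ℕ} {W : Fin (n + 1) → Type*}
  [∀ i, NormedAddCommGroup (W i)] [∀ i, InnerProductSpace ℝ (W i)]
  [∀ i, CompleteSpace (W i)]

/-- The partial additive Schwarz operator `∑_{i ∈ I} ω_i R_i T_i`; for `I = univ` it is `P`. -/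
noncomputable def schwarz (R : ∀ i, W i →L[ℝ] V) (ω : Fin (n + 1) → ℝ)
    (I : Finset (Fin (n + 1))) : V →L[ℝ] V :=
  ∑ i ∈ I, ω i • (R i ∘L ContinuousLinearMap.adjoint (R i))

variable (R : ∀ i, W i →L[ℝ] V) (ω : Fin (n + 1) → ℝ)

lemma schwarz_apply (I : Finset (Fin (n + 1))) (w : V) :
    schwarz R ω I w = ∑ i ∈ I, ω i • R i ((ContinuousLinearMap.adjoint (R i)) w) := by
  simp [schwarz]

lemma inner_schwarz (I : Finset (Fin (n + 1))) (w x : V) :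
    ⟪schwarz R ω I w, x⟫ = ∑ i ∈ I, ω i *
      ⟪ContinuousLinearMap.adjoint (R i) w, ContinuousLinearMap.adjoint (R i) x⟫ := by
  simp [schwarz_apply, sum_inner, real_inner_smul_left, ContinuousLinearMap.adjoint_inner_right]

lemma inner_schwarz_comm (I : Finset (Fin (n + 1))) (w x : V) :
    ⟪schwarz R ω I w, x⟫ = ⟪w, schwarz R ω I x⟫ := by
  rw [real_inner_comm _ w, inner_schwarz, inner_schwarz]
  simp_rw [real_inner_comm]

/-- Under (NE1) the operator `P` has a bounded right inverse, by Lax–Milgram. -/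
lemma exists_schwarz_inverse {l : ℝ} (hl : 0 < l)
    (hP : ∀ v : V, l * ‖v‖ ^ 2 ≤ ⟪schwarz R ω Finset.univ v, v⟫) :
    ∃ S : V →L[ℝ] V, ∀ v, schwarz R ω Finset.univ (S v) = v := by
  let B : V →L[ℝ] V →L[ℝ] ℝ := (innerSL ℝ) ∘L schwarz R ω Finset.univ
  have hB : IsCoercive B := ⟨l, hl, fun v => by
    have := hP v
    rw [mul_assoc, ← sq]
    exact this⟩
  refine ⟨hB.continuousLinearEquivOfBilin.symm, fun v => ?_⟩
  refine ext_inner_right ℝ fun w => ?_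
  have h := hB.continuousLinearEquivOfBilin_apply (hB.continuousLinearEquivOfBilin.symm v) w
  rw [ContinuousLinearEquiv.apply_symm_apply] at h
  exact h.symm

/-- (NE2) restricted to the components in `I`, applied to `w_i = T_i w`. -/
lemma norm_sq_schwarz_le {l : ℝ}
    (hNE2 : ∀ w : ∀ i, W i, ‖∑ i, ω i • R i (w i)‖ ^ 2 ≤ l * ∑ i, ω i * ‖w i‖ ^ 2)
    (I : Finset (Fin (n + 1))) (w : V) :
    ‖schwarz R ω I w‖ ^ 2 ≤ l * ⟪schwarz R ω I w, w⟫ := by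
  have h := hNE2 (fun i => if i ∈ I then ContinuousLinearMap.adjoint (R i) w else 0)
  have h1 : ∑ i, ω i • R i (if i ∈ I then ContinuousLinearMap.adjoint (R i) w else 0) =
      schwarz R ω I w := by
    simp [schwarz_apply, apply_ite]
  have h2 : ∑ i, ω i * ‖if i ∈ I then ContinuousLinearMap.adjoint (R i) w else 0‖ ^ 2 =
      ⟪schwarz R ω I w, w⟫ := by
    simp [inner_schwarz, apply_ite]
  rwa [h1, h2] at h

variable {R ω} {S : V →L[ℝ] V}

lemma inner_inverse_comm (hS : ∀ v, schwarz R ω Finset.univ (S v) = v) (x y : V) :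
    ⟪S x, y⟫ = ⟪x, S y⟫ := by
  conv_lhs => rw [← hS y]
  rw [← inner_schwarz_comm, hS]

lemma inner_inverse_nonneg (hω : ∀ i, 0 < ω i)
    (hS : ∀ v, schwarz R ω Finset.univ (S v) = v) (x : V) : 0 ≤ ⟪S x, x⟫ := by
  have h : ⟪S x, x⟫ = ⟪schwarz R ω Finset.univ (S x), S x⟫ := by
    rw [hS, real_inner_comm]
  rw [h, inner_schwarz]
  exact Finset.sum_nonneg fun i _ => mul_nonneg (hω i).le real_inner_self_nonneg

/-- One half of the additive Schwarz lemma: `D = ∑_{i ∈ I} ω_i R_i T_i w` is a splitting of `D`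
with energy `∑_{i ∈ I} ω_i ‖T_i w‖² = ⟪D, w⟫`, and `⟪P⁻¹D, D⟫` is the minimal such energy. -/
lemma inner_inverse_schwarz_le (hω : ∀ i, 0 < ω i)
    (hS : ∀ v, schwarz R ω Finset.univ (S v) = v) (I : Finset (Fin (n + 1))) (w : V) :
    ⟪S (schwarz R ω I w), schwarz R ω I w⟫ ≤ ⟪schwarz R ω I w, w⟫ := by
  set D := schwarz R ω I w with hD
  have h1 : ⟪S D, D⟫ = ∑ i, ω i * ‖ContinuousLinearMap.adjoint (R i) (S D)‖ ^ 2 := by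
    have h : ⟪S D, D⟫ = ⟪schwarz R ω Finset.univ (S D), S D⟫ := by
      rw [hS, real_inner_comm]
    simp only [h, inner_schwarz, real_inner_self_eq_norm_sq]
  have h2 : ∑ i ∈ I, ω i * ‖ContinuousLinearMap.adjoint (R i) (S D)‖ ^ 2 ≤ ⟪S D, D⟫ := by
    rw [h1]
    exact Finset.sum_le_sum_of_subset_of_nonneg (Finset.subset_univ _)
      fun i _ _ => mul_nonneg (hω i).le (sq_nonneg _)
  have h3 : ⟪S D, D⟫ = ∑ i ∈ I, ω i *
      ⟪ContinuousLinearMap.adjoint (R i) w, ContinuousLinearMap.adjoint (R i) (S D)⟫ := by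
    rw [← inner_schwarz, ← hD, real_inner_comm]
  have h4 : ⟪D, w⟫ = ∑ i ∈ I, ω i * ‖ContinuousLinearMap.adjoint (R i) w‖ ^ 2 := by
    simp only [hD, inner_schwarz, real_inner_self_eq_norm_sq]
  have h5 : 2 * ⟪S D, D⟫ ≤ ⟪D, w⟫ +
      ∑ i ∈ I, ω i * ‖ContinuousLinearMap.adjoint (R i) (S D)‖ ^ 2 := by
    rw [h3, h4, Finset.mul_sum, ← Finset.sum_add_distrib]
    refine Finset.sum_le_sum fun i _ => ?_
    have h := norm_sub_sq_real (ContinuousLinearMap.adjoint (R i) w)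
      (ContinuousLinearMap.adjoint (R i) (S D))
    have h' := mul_nonneg (hω i).le (sq_nonneg ‖ContinuousLinearMap.adjoint (R i) w -
      ContinuousLinearMap.adjoint (R i) (S D)‖)
    rw [h] at h'
    linarith
  linarith

lemma inner_inverse_le {l : ℝ} (hl : 0 < l)
    (hP : ∀ v : V, l * ‖v‖ ^ 2 ≤ ⟪schwarz R ω Finset.univ v, v⟫)
    (hS : ∀ v, schwarz R ω Finset.univ (S v) = v) (z : V) :
    ⟪S z, z⟫ ≤ l⁻¹ * ‖z‖ ^ 2 := by
  have h1 := hP (S z)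
  rw [hS, real_inner_comm] at h1
  have h2 := norm_sub_sq_real z (l • S z)
  rw [real_inner_smul_right, norm_smul, Real.norm_of_nonneg hl.le, real_inner_comm] at h2
  rw [inv_mul_eq_div, le_div_iff₀ hl]
  nlinarith [sq_nonneg ‖z - l • S z‖, mul_le_mul_of_nonneg_left h1 hl.le]

/-! ### The Lyapunov function -/

/-- The Lyapunov function `⟪P⁻¹ e_v, e_v⟫ + l⁻¹ ‖e_u‖²` of a pair `(e_u, e_v)`; `S` stands for
`P⁻¹` and `l` for the lower stability bound. -/
noncomputable def lyapunov (S : V →L[ℝ] V) (l : ℝ) (q : V × V) : ℝ :=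
  ⟪S q.2, q.2⟫ + l⁻¹ * ‖q.1‖ ^ 2

/-- Bound for one step with a fixed subset. Since `η² = λ̲⁻¹ λ̄⁻¹`, the gain in `λ̲⁻¹ ‖e_u‖²`
absorbs the term of `⟪P⁻¹ e_v, e_v⟫` quadratic in `D`; what is left is affine in `D`, so that its
mean can be computed. -/
lemma lyapunov_step_le (hω : ∀ i, 0 < ω i)
    (hS : ∀ v, schwarz R ω Finset.univ (S v) = v) {ll lb η : ℝ} (hll : 0 < ll) (hlb : 0 < lb)
    (hη : η ^ 2 = ll⁻¹ * lb⁻¹)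
    (hNE2 : ∀ w : ∀ i, W i, ‖∑ i, ω i • R i (w i)‖ ^ 2 ≤ lb * ∑ i, ω i * ‖w i‖ ^ 2)
    (I : Finset (Fin (n + 1))) (w z : V) :
    lyapunov S ll (w - lb⁻¹ • schwarz R ω I w, z - η • schwarz R ω I w) ≤
      ⟪S z, z⟫ + ll⁻¹ * ‖w‖ ^ 2 - 2 * η * ⟪schwarz R ω I w, S z⟫ := by
  have h1 := inner_inverse_schwarz_le hω hS I w
  have h2 := norm_sq_schwarz_le R ω hNE2 I w
  set D := schwarz R ω I w
  have h3 : ⟪S (z - η • D), z - η • D⟫ = ⟪S z, z⟫ - 2 * η * ⟪D, S z⟫ + η ^ 2 * ⟪S D, D⟫ := by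
    simp only [map_sub, map_smul, inner_sub_left, inner_sub_right, real_inner_smul_left,
      real_inner_smul_right]
    rw [inner_inverse_comm hS D z, real_inner_comm D (S z)]
    ring
  have h4 : ‖w - lb⁻¹ • D‖ ^ 2 ≤ ‖w‖ ^ 2 - lb⁻¹ * ⟪D, w⟫ := by
    rw [norm_sub_sq_real, real_inner_smul_right, norm_smul,
      Real.norm_of_nonneg (inv_nonneg.2 hlb.le), real_inner_comm D w]
    have h5 : (lb⁻¹ * ‖D‖) ^ 2 ≤ lb⁻¹ * ⟪D, w⟫ := by
      calc (lb⁻¹ * ‖D‖) ^ 2 = lb⁻¹ ^ 2 * ‖D‖ ^ 2 := by ring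
        _ ≤ lb⁻¹ ^ 2 * (lb * ⟪D, w⟫) := by gcongr
        _ = lb⁻¹ * ⟪D, w⟫ := by field_simp
    linarith
  have h6 := mul_le_mul_of_nonneg_left h4 (inv_nonneg.2 hll.le)
  have h7 := mul_le_mul_of_nonneg_left h1 (sq_nonneg η)
  simp only [lyapunov, h3]
  rw [hη] at h7 ⊢
  nlinarith

/-- The averaged form of the bound in `lyapunov_step_le`, with `r = p / (n+1)`. The weight `α` in
`e_w` is chosen so that, by polarization, the cross term yields `β λ̲⁻¹ ‖e_u‖²`, a nonpositive
multiple of `‖e_w - e_u‖²` and multiples of `‖e_w‖²`; the latter cancel against the remaining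
ones by the choice of `β` and `η`. -/
lemma deterministic_step_le (hω : ∀ i, 0 < ω i)
    (hS : ∀ v, schwarz R ω Finset.univ (S v) = v) {ll lb η r α β : ℝ} (hll : 0 < ll)
    (hlb : 0 < lb) (hη : η ^ 2 = ll⁻¹ * lb⁻¹) (hr : 0 < r)
    (hP : ∀ v : V, ll * ‖v‖ ^ 2 ≤ ⟪schwarz R ω Finset.univ v, v⟫)
    (hβ : 1 - β = ll * η * r) (hβ0 : 0 ≤ β) (hβ1 : β ≤ 1)
    (hα : 0 < α) (hαeq : (1 - α) / α = lb * η / r) (a v : V) :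
    let w := α • v + (1 - α) • a
    let z := β • v + (1 - β) • w
    ⟪S z, z⟫ + ll⁻¹ * ‖w‖ ^ 2 - 2 * η * r * ⟪w, z⟫ ≤ β * lyapunov S ll (a, v) := by
  intro w z
  have hconv : ⟪S z, z⟫ ≤ β * ⟪S v, v⟫ + (1 - β) * ⟪S w, w⟫ := by
    have h := mul_nonneg (mul_nonneg hβ0 (sub_nonneg.2 hβ1))
      (inner_inverse_nonneg hω hS (v - w))
    have h' : ⟪S z, z⟫ = β * ⟪S v, v⟫ + (1 - β) * ⟪S w, w⟫ -
        β * (1 - β) * ⟪S (v - w), v - w⟫ := by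
      simp only [z, map_sub, map_add, map_smul, inner_sub_left, inner_sub_right, inner_add_left,
        inner_add_right, real_inner_smul_left, real_inner_smul_right]
      ring
    linarith
  have hw := inner_inverse_le hll hP hS w
  set γ := (1 - α) / α with hγ
  have hv : v = w + γ • (w - a) := by
    have : α • (w + γ • (w - a)) = α • v := by
      have hαγ : α * γ = 1 - α := by rw [hγ]; field_simp
      rw [smul_add, smul_smul, hαγ]
      simp only [w]
      module
    exact (smul_right_injective V hα.ne' this).symm
  have hz : z = w + (β * γ) • (w - a) := by
    simp only [z]
    conv_lhs => rw [hv]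
    module
  have hwz : ⟪w, z⟫ = ‖w‖ ^ 2 + β * γ * (‖w‖ ^ 2 - ⟪w, a⟫) := by
    rw [hz, inner_add_right, real_inner_smul_right, inner_sub_right, real_inner_self_eq_norm_sq]
  have hpol := norm_sub_sq_real w a
  have hγr : γ * r = lb * η := by rw [hαeq]; field_simp
  have hcoef : η * r * γ = ll⁻¹ := by
    calc η * r * γ = η * (γ * r) := by ring
      _ = lb * η ^ 2 := by rw [hγr]; ring
      _ = ll⁻¹ := by rw [hη]; field_simp
  have hηr : η * r = ll⁻¹ * (1 - β) := by rw [hβ]; field_simp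
  have hmain : 2 * η * r * ⟪w, z⟫ = 2 * ll⁻¹ * (1 - β) * ‖w‖ ^ 2 +
      ll⁻¹ * β * (‖w‖ ^ 2 + ‖w - a‖ ^ 2 - ‖a‖ ^ 2) := by
    rw [hwz, hpol]
    linear_combination (2 * ‖w‖ ^ 2) * hηr + (2 * β * (‖w‖ ^ 2 - ⟪w, a⟫)) * hcoef
  rw [hmain]
  have h8 := mul_le_mul_of_nonneg_left hw (sub_nonneg.2 hβ1)
  have h9 : 0 ≤ ll⁻¹ * β * ‖w - a‖ ^ 2 := by positivity
  simp only [lyapunov]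
  nlinarith

/-- One step of the scheme contracts the mean of the Lyapunov function by the factor `β`. -/
lemma sum_lyapunov_step_le (hω : ∀ i, 0 < ω i)
    (hS : ∀ v, schwarz R ω Finset.univ (S v) = v) {ll lb η α β : ℝ} {k : ℕ} (hk : 1 ≤ k)
    (hll : 0 < ll) (hlb : 0 < lb) (hη : η ^ 2 = ll⁻¹ * lb⁻¹)
    (hP : ∀ v : V, ll * ‖v‖ ^ 2 ≤ ⟪schwarz R ω Finset.univ v, v⟫)
    (hNE2 : ∀ w : ∀ i, W i, ‖∑ i, ω i • R i (w i)‖ ^ 2 ≤ lb * ∑ i, ω i * ‖w i‖ ^ 2)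
    (hβ : 1 - β = ll * η * (k / (n + 1))) (hβ0 : 0 ≤ β) (hβ1 : β ≤ 1)
    (hα : 0 < α) (hαeq : (1 - α) / α = lb * η / (k / (n + 1))) (a v : V) :
    let w := α • v + (1 - α) • a
    ∑ I ∈ Finset.powersetCard k (Finset.univ : Finset (Fin (n + 1))),
      lyapunov S ll (w - lb⁻¹ • schwarz R ω I w,
        β • v + (1 - β) • w - η • schwarz R ω I w) ≤
      ((n + 1).choose k : ℝ) * (β * lyapunov S ll (a, v)) := by
  intro w
  set z := β • v + (1 - β) • w with hz
  have hk' : (0 : ℝ) < k := by exact_mod_cast hk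
  have hdet := deterministic_step_le hω hS hll hlb hη (r := k / (n + 1)) (by positivity) hP hβ
    hβ0 hβ1 hα hαeq a v
  have hsum : ∑ I ∈ Finset.powersetCard k (Finset.univ : Finset (Fin (n + 1))),
      ⟪schwarz R ω I w, S z⟫ = (n + 1).choose k * (k / (n + 1)) * ⟪w, z⟫ := by
    rw [← sum_inner]
    simp_rw [schwarz_apply]
    rw [sum_powersetCard_sum hk, real_inner_smul_left, ← schwarz_apply, inner_schwarz_comm, hS]
  calc
    _ ≤ ∑ I ∈ Finset.powersetCard k (Finset.univ : Finset (Fin (n + 1))),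
        (⟪S z, z⟫ + ll⁻¹ * ‖w‖ ^ 2 - 2 * η * ⟪schwarz R ω I w, S z⟫) :=
      Finset.sum_le_sum fun I _ => lyapunov_step_le hω hS hll hlb hη hNE2 I w z
    _ = (n + 1).choose k *
        (⟪S z, z⟫ + ll⁻¹ * ‖w‖ ^ 2 - 2 * η * (k / (n + 1)) * ⟪w, z⟫) := by
      rw [Finset.sum_sub_distrib, ← Finset.mul_sum, hsum, Finset.sum_const,
        Finset.card_powersetCard, Finset.card_univ, Fintype.card_fin, nsmul_eq_mul]
      ring
    _ ≤ _ := mul_le_mul_of_nonneg_left hdet (Nat.cast_nonneg _)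

lemma accelSeq_congr (ξ η : ℝ) (α β : ℕ → ℝ) (u : V) {Is Js : ℕ → Finset (Fin (n + 1))} (m : ℕ)
    (h : ∀ s < m, Is s = Js s) :
    accelSeq R ω ξ η α β u Is m = accelSeq R ω ξ η α β u Js m := by
  induction m with
  | zero => rfl
  | succ m ih =>
    simp only [accelSeq, ih fun s hs => h s (hs.trans m.lt_succ_self), h m m.lt_succ_self]

end Schwarz

/-- **Theorem 2, multi-step bound for the accelerated scheme.** Assume (NE1),
(NE2) with `0 < λ_min ≤ λ_max`, and `0 < λ̲ ≤ λ_min ≤ λ_max ≤ λ̄`, `κ̄ = λ̄/λ̲`. With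
`ξ = λ̄⁻¹`, `η = (λ̄λ̲)^{-1/2}`, `βₛ = 1 − pₛ/((n+1)√κ̄)`, `αₛ ∈ (0,1)` determined by
`(1−αₛ)/αₛ = (n+1)λ̄η/pₛ`, and independent uniform random subsets `Iₛ` of sizes `pₛ`:
`E(‖e_u⁽ᵐ⁾‖²) ≤ 2 ∏_{s<m} (1 − pₛ/((n+1)√κ̄)) ‖u‖²` for every `m ≥ 1`. -/
theorem accelerated_multi_step_bound
    {V : Type*} [NormedAddCommGroup V] [InnerProductSpace ℝ V] [CompleteSpace V]
    {n : ℕ} {W : Fin (n + 1) → Type*}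
    [∀ i, NormedAddCommGroup (W i)] [∀ i, InnerProductSpace ℝ (W i)]
    [∀ i, CompleteSpace (W i)]
    (R : ∀ i, W i →L[ℝ] V) (ω : Fin (n + 1) → ℝ) (hω : ∀ i, 0 < ω i)
    (lmin lmax : ℝ) (hlmin : 0 < lmin) (hminmax : lmin ≤ lmax)
    (hNE1 : ∀ v : V,
      lmin * ‖v‖ ^ 2 ≤ ⟪(∑ i, ω i • R i ((ContinuousLinearMap.adjoint (R i)) v)), v⟫)
    (hNE2 : ∀ w : ∀ i, W i,
      ‖∑ i, ω i • R i (w i)‖ ^ 2 ≤ lmax * ∑ i, ω i * ‖w i‖ ^ 2)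
    (ll lb : ℝ) (hll : 0 < ll) (hlllmin : ll ≤ lmin) (hlmaxlb : lmax ≤ lb)
    (u : V) (p : ℕ → ℕ) (hp : ∀ s, 1 ≤ p s ∧ p s ≤ n + 1)
    (η : ℝ) (hη : η = (Real.sqrt (lb * ll))⁻¹)
    (β : ℕ → ℝ) (hβ : ∀ s, β s = 1 - (p s : ℝ) / ((n + 1) * Real.sqrt (lb / ll)))
    (α : ℕ → ℝ) (hα : ∀ s, α s ∈ Set.Ioo (0 : ℝ) 1)
    (hαeq : ∀ s, (1 - α s) / α s = (n + 1) * lb * η / (p s))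
    (m : ℕ) (hm : 1 ≤ m) :
    (∏ s ∈ Finset.range m, ((n + 1).choose (p s) : ℝ))⁻¹ *
        ∑ J ∈ Fintype.piFinset
            (fun s : Fin m =>
              Finset.powersetCard (p s.val) (Finset.univ : Finset (Fin (n + 1)))),
          ‖(accelSeq R ω lb⁻¹ η α β u (fun s => if h : s < m then J ⟨s, h⟩ else ∅) m).1‖ ^ 2 ≤
      2 * (∏ s ∈ Finset.range m,
            (1 - (p s : ℝ) / ((n + 1) * Real.sqrt (lb / ll)))) * ‖u‖ ^ 2 := by
  have hlb : 0 < lb := by linarith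
  have hP : ∀ v : V, ll * ‖v‖ ^ 2 ≤ ⟪schwarz R ω Finset.univ v, v⟫ := fun v => by
    rw [schwarz_apply]
    exact (mul_le_mul_of_nonneg_right hlllmin (sq_nonneg _)).trans (hNE1 v)
  have hNE2' : ∀ w : ∀ i, W i,
      ‖∑ i, ω i • R i (w i)‖ ^ 2 ≤ lb * ∑ i, ω i * ‖w i‖ ^ 2 := fun w =>
    (hNE2 w).trans (mul_le_mul_of_nonneg_right hlmaxlb
      (Finset.sum_nonneg fun i _ => mul_nonneg (hω i).le (sq_nonneg _)))
  obtain ⟨S, hS⟩ := exists_schwarz_inverse R ω hll hP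
  have hη2 : η ^ 2 = ll⁻¹ * lb⁻¹ := by
    rw [hη, inv_pow, Real.sq_sqrt (by positivity), mul_inv, mul_comm]
  -- `1 / √(lb / ll) = ll * η`, the elementary link between `β` and `η`
  have hκ : (Real.sqrt (lb / ll))⁻¹ = ll * η := by
    have h : lb * ll = lb / ll * ll ^ 2 := by field_simp
    rw [hη, h, Real.sqrt_mul (by positivity), Real.sqrt_sq hll.le]
    have : 0 < Real.sqrt (lb / ll) := Real.sqrt_pos.2 (by positivity)
    field_simp
  have hκ1 : 1 ≤ Real.sqrt (lb / ll) := by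
    rw [Real.one_le_sqrt, one_le_div hll]
    linarith
  have hp0 (s : ℕ) : (0 : ℝ) < p s := by exact_mod_cast (hp s).1
  have hβ' (s : ℕ) : 1 - β s = ll * η * (p s / (n + 1)) := by
    rw [hβ, ← hκ]
    field_simp
    ring
  have hβ0 (s : ℕ) : 0 ≤ β s := by
    have hpn : (p s : ℝ) ≤ n + 1 := by exact_mod_cast (hp s).2
    rw [hβ, sub_nonneg, div_le_one (by positivity)]
    nlinarith [hp0 s]
  have hβ1 (s : ℕ) : β s ≤ 1 := by
    rw [hβ, sub_le_self_iff]
    positivity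
  have hαeq' (s : ℕ) : (1 - α s) / α s = lb * η / (p s / (n + 1)) := by
    rw [hαeq]
    have := hp0 s
    field_simp
  have key (m : ℕ) : ∑ J ∈ Fintype.piFinset
      (fun s : Fin m => Finset.powersetCard (p s.val) (Finset.univ : Finset (Fin (n + 1)))),
      lyapunov S ll (accelSeq R ω lb⁻¹ η α β u (fun s => if h : s < m then J ⟨s, h⟩ else ∅) m) ≤
      (∏ s ∈ Finset.range m, ((n + 1).choose (p s) : ℝ)) * ((∏ s ∈ Finset.range m, β s) *
        lyapunov S ll (u, u)) := by
    induction m with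
    | zero => simp [accelSeq]
    | succ m ih =>
      rw [sum_piFinset_snoc]
      simp only [Fin.val_castSucc, Fin.val_last]
      calc
        _ ≤ ∑ J ∈ Fintype.piFinset (fun s : Fin m =>
              Finset.powersetCard (p s.val) (Finset.univ : Finset (Fin (n + 1)))),
            ((n + 1).choose (p m) : ℝ) * (β m * lyapunov S ll
              (accelSeq R ω lb⁻¹ η α β u (fun s => if h : s < m then J ⟨s, h⟩ else ∅) m)) := by
          refine Finset.sum_le_sum fun J _ => ?_
          set q := accelSeq R ω lb⁻¹ η α β u (fun s => if h : s < m then J ⟨s, h⟩ else ∅) m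
            with hq
          refine le_trans (le_of_eq (Finset.sum_congr rfl fun I _ => ?_))
            (sum_lyapunov_step_le hω hS (hp m).1 hll hlb hη2 hP hNE2' (hβ' m) (hβ0 m) (hβ1 m)
              (hα m).1 (hαeq' m) q.1 q.2)
          have hcongr : accelSeq R ω lb⁻¹ η α β u (fun s => if h : s < m + 1 then
              Fin.snoc (α := fun _ => Finset (Fin (n + 1))) J I ⟨s, h⟩ else ∅) m = q := by
            refine accelSeq_congr _ _ _ _ _ m fun s hs => ?_
            simp [hs, Nat.lt_succ_of_lt hs, Fin.snoc]
          simp only [accelSeq, hcongr, schwarz_apply]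
          simp [Fin.snoc]
        _ = (n + 1).choose (p m) * β m * ∑ J ∈ Fintype.piFinset (fun s : Fin m =>
              Finset.powersetCard (p s.val) (Finset.univ : Finset (Fin (n + 1)))),
            lyapunov S ll
              (accelSeq R ω lb⁻¹ η α β u (fun s => if h : s < m then J ⟨s, h⟩ else ∅) m) := by
          simp_rw [← mul_assoc, ← Finset.mul_sum]
        _ ≤ (n + 1).choose (p m) * β m * ((∏ s ∈ Finset.range m, ((n + 1).choose (p s) : ℝ)) *
              ((∏ s ∈ Finset.range m, β s) * lyapunov S ll (u, u))) :=
          mul_le_mul_of_nonneg_left ih (mul_nonneg (Nat.cast_nonneg _) (hβ0 m))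
        _ = _ := by
          rw [Finset.prod_range_succ, Finset.prod_range_succ]
          ring
  have hC : 0 < ∏ s ∈ Finset.range m, ((n + 1).choose (p s) : ℝ) :=
    Finset.prod_pos fun s _ => by exact_mod_cast Nat.choose_pos (hp s).2
  have hB : 0 ≤ ∏ s ∈ Finset.range m, β s := Finset.prod_nonneg fun s _ => hβ0 s
  have hu : lyapunov S ll (u, u) ≤ ll⁻¹ * (2 * ‖u‖ ^ 2) := by
    have := inner_inverse_le hll hP hS u
    simp only [lyapunov]
    linarith
  simp_rw [← hβ]
  rw [inv_mul_le_iff₀ hC]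
  refine le_of_mul_le_mul_left ?_ (inv_pos.2 hll)
  calc
    _ ≤ ∑ J ∈ Fintype.piFinset (fun s : Fin m =>
          Finset.powersetCard (p s.val) (Finset.univ : Finset (Fin (n + 1)))),
        lyapunov S ll
          (accelSeq R ω lb⁻¹ η α β u (fun s => if h : s < m then J ⟨s, h⟩ else ∅) m) := by
      rw [Finset.mul_sum]
      exact Finset.sum_le_sum fun J _ =>
        le_add_of_nonneg_left (inner_inverse_nonneg hω hS _)
    _ ≤ _ := key m
    _ ≤ (∏ s ∈ Finset.range m, ((n + 1).choose (p s) : ℝ)) * ((∏ s ∈ Finset.range m, β s) *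
        (ll⁻¹ * (2 * ‖u‖ ^ 2))) := by gcongr
    _ = _ := by ring
end
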